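/- arXiv:2201.11426 — 2 statements merged into one kernel-verified Lean document; each statement's English description precedes it below -/
import Mathlib

section
/- Let (T₀, T̃₀) be a joint pair of closed abstract Friedrichs operators on a complex Hilbert space H, and let T_r be any bijective realisation of T₀, i.e. T_r = T₁|_{dom T_r} with W₀ ⊆ dom T_r ⊆ W, dom T_r closed in the graph norm, and T_r : dom T_r → H bijective. Then the graph space decomposes as the direct sums W = W₀ ∔ T_r^{-1}(ker T̃₁) ∔ ker T₁ and W = W₀ ∔ (T_r*)^{-1}(ker T₁) ∔ ker T̃₁. -/
open LinearPMap
open scoped LinearPMap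

noncomputable section

variable {H : Type*} [NormedAddCommGroup H] [InnerProductSpace ℂ H] [CompleteSpace H]

local notation "⟪" x ", " y "⟫" => @inner ℂ _ _ x y

/-- Conditions (T1)–(T2) for a pair of operators with common dense domain. -/
structure IsPreFriedrichsPair (T Tt : H →ₗ.[ℂ] H) : Prop where
  dom_eq : T.domain = Tt.domain
  dense' : Dense (T.domain : Set H)
  t1 : ∀ (φ : T.domain) (ψ : Tt.domain), ⟪T φ, (ψ : H)⟫ = ⟪(φ : H), Tt ψ⟫
  t2 : ∃ c : ℝ, 0 < c ∧ ∀ φ : (T + Tt).domain, ‖(T + Tt) φ‖ ≤ c * ‖(φ : H)‖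

/-- A joint pair of abstract Friedrichs operators: (T1)–(T3). -/
structure IsFriedrichsPair (T Tt : H →ₗ.[ℂ] H) extends IsPreFriedrichsPair T Tt : Prop where
  t3 : ∃ μ₀ : ℝ, 0 < μ₀ ∧ ∀ φ : (T + Tt).domain,
        2 * μ₀ * ‖(φ : H)‖ ^ 2 ≤ (⟪(T + Tt) φ, (φ : H)⟫).re

/-- The kernel of a partially defined operator, as a submodule of the ambient space. -/
def pKer (f : H →ₗ.[ℂ] H) : Submodule ℂ H :=
  (LinearMap.ker f.toFun).map f.domain.subtype

/-- The preimage of a submodule `K` under a partially defined operator, as a submodule of the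
ambient space. -/
def pPreimage (f : H →ₗ.[ℂ] H) (K : Submodule ℂ H) : Submodule ℂ H :=
  (Submodule.comap f.toFun K).map f.domain.subtype

/-!
Let `A ⊆ R ⊆ M` with `A` closed and `R` closed and bijective. By the closed graph theorem `R` has
a bounded everywhere defined inverse `S`, which carries decompositions of `H` to ones of `dom R`.
Apply this to `H = ran A ⊕ ker A†`: since `ran A = {y | (S y, y) ∈ graph A}` is closed, it is a
decomposition, and its image is `dom R = dom A ∔ R⁻¹(ker A†)`. Subtracting `S (M w)` from `w`
shows `dom M = dom R ∔ ker M`. The second decomposition is the first one for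
`T̃₀ ⊆ R† ⊆ T₀†`, because `S†` inverts `R†`.
-/

section Submodules

variable {R M : Type*} [Ring R] [AddCommGroup M] [Module R M]

/-- The direct sum decomposition `W = U ∔ V ∔ N` inside an ambient module, directness being
expressed by the uniqueness of the representation of `0`. -/
def IsDirectSumOfThree (W U V N : Submodule R M) : Prop :=
  U ⊔ V ⊔ N = W ∧ ∀ u ∈ U, ∀ v ∈ V, ∀ ν ∈ N, u + v + ν = 0 → u = 0 ∧ v = 0 ∧ ν = 0

theorem isDirectSumOfThree_of_disjoint {U V N : Submodule R M} (hUV : Disjoint U V)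
    (hN : Disjoint (U ⊔ V) N) : IsDirectSumOfThree (U ⊔ V ⊔ N) U V N := by
  refine ⟨rfl, fun u hu v hv ν hν h ↦ ?_⟩
  have huv : u + v = 0 :=
    Submodule.disjoint_def.1 hN _ (Submodule.add_mem_sup hu hv)
      (eq_neg_of_add_eq_zero_left h ▸ N.neg_mem hν)
  have hu0 : u = 0 :=
    Submodule.disjoint_def.1 hUV _ hu (eq_neg_of_add_eq_zero_left huv ▸ V.neg_mem hv)
  exact ⟨hu0, by simpa [hu0] using huv, by simpa [huv] using h⟩

end Submodules

section Graph

variable {R E F : Type*} [Ring R] [AddCommGroup E] [Module R E] [AddCommGroup F] [Module R F]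

theorem mem_graph_domRestrict_iff {f : E →ₗ.[R] F} {S : Submodule R E} {p : E × F} :
    p ∈ (f.domRestrict S).graph ↔ p.1 ∈ S ∧ p ∈ f.graph := by
  simp only [mem_graph_iff]
  constructor
  · rintro ⟨x, hx, hfx⟩
    exact ⟨hx ▸ x.2.1, ⟨x, x.2.2⟩, hx, hfx⟩
  · rintro ⟨hp, x, hx, hfx⟩
    exact ⟨⟨x, hx ▸ hp, x.2⟩, hx, hfx⟩

theorem le_domRestrict_of_le {f g : E →ₗ.[R] F} {S : Submodule R E} (hfg : f ≤ g)
    (hS : f.domain ≤ S) : f ≤ g.domRestrict S :=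
  le_of_le_graph fun _ hp ↦
    mem_graph_domRestrict_iff.2 ⟨hS (mem_domain_of_mem_graph hp), le_graph_of_le hfg hp⟩

end Graph

section Topology

variable {𝕜 E F : Type*} [CommRing 𝕜] [AddCommGroup E] [Module 𝕜 E] [TopologicalSpace E]
  [AddCommGroup F] [Module 𝕜 F] [TopologicalSpace F]

theorem isClosed_domRestrict_iff {f : E →ₗ.[𝕜] F} {S : Submodule 𝕜 E} :
    (f.domRestrict S).IsClosed ↔ IsClosed {p : E × F | p.1 ∈ S ∧ p ∈ f.graph} := by
  rw [LinearPMap.IsClosed]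
  exact iff_of_eq (congrArg _ (Set.ext fun p ↦ mem_graph_domRestrict_iff))

end Topology

section KernelPreimage

variable {V : Type*} [NormedAddCommGroup V] [InnerProductSpace ℂ V]

theorem mem_pKer_iff {f : V →ₗ.[ℂ] V} {x : V} : x ∈ pKer f ↔ (x, 0) ∈ f.graph := by
  simp [pKer]

theorem mem_pPreimage_iff {f : V →ₗ.[ℂ] V} {K : Submodule ℂ V} {x : V} :
    x ∈ pPreimage f K ↔ ∃ y ∈ K, (x, y) ∈ f.graph := by
  simp [pPreimage]

theorem pKer_le_domain (f : V →ₗ.[ℂ] V) : pKer f ≤ f.domain :=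
  Submodule.map_subtype_le _ _

end KernelPreimage

/-- `S` is an inverse of the partially defined operator `f` which is defined everywhere, so that
`f` is a bijection of its domain onto the whole of the codomain. -/
def IsTotalInverse {R E F : Type*} [Ring R] [AddCommGroup E] [Module R E] [AddCommGroup F]
    [Module R F] (f : E →ₗ.[R] F) (S : F →ₗ[R] E) : Prop :=
  ∀ x y, (x, y) ∈ f.graph ↔ S y = x

namespace IsTotalInverse

section Algebra

variable {R E F : Type*} [Ring R] [AddCommGroup E] [Module R E] [AddCommGroup F] [Module R F]
  {f g : E →ₗ.[R] F} {S : F →ₗ[R] E}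

theorem mem_graph (h : IsTotalInverse f S) (y : F) : (S y, y) ∈ f.graph :=
  (h _ _).2 rfl

theorem injective (h : IsTotalInverse f S) : Function.Injective S := fun y z hyz ↦
  f.mem_graph_snd_inj (h.mem_graph y) (h.mem_graph z) hyz

theorem map_range_eq_domain_of_le (h : IsTotalInverse f S) (hgf : g ≤ f) :
    (LinearMap.range g.toFun).map S = g.domain := by
  have apply_eq (x : g.domain) : S (g x) = x := (h _ _).1 (le_graph_of_le hgf (g.mem_graph x))
  ext x
  constructor
  · rintro ⟨_, ⟨z, rfl⟩, rfl⟩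
    exact (apply_eq z).symm ▸ z.2
  · exact fun hx ↦ ⟨g ⟨x, hx⟩, ⟨⟨x, hx⟩, rfl⟩, apply_eq _⟩

theorem range_eq_domain (h : IsTotalInverse f S) : LinearMap.range S = f.domain := by
  have range_eq_top : LinearMap.range f.toFun = ⊤ :=
    LinearMap.range_eq_top.2 fun y ↦ mem_range_iff.2 ⟨S y, h.mem_graph y⟩
  rw [← h.map_range_eq_domain_of_le le_rfl, range_eq_top, Submodule.map_top]

end Algebra

section Extension

variable {V : Type*} [NormedAddCommGroup V] [InnerProductSpace ℂ V] {A R M : V →ₗ.[ℂ] V}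
  {S : V →ₗ[ℂ] V}

theorem pPreimage_eq_map (h : IsTotalInverse R S) (K : Submodule ℂ V) :
    pPreimage R K = K.map S := by
  ext x
  simp only [mem_pPreimage_iff, h x, Submodule.mem_map]

theorem disjoint_domain_pKer (h : IsTotalInverse R S) (hRM : R ≤ M) :
    Disjoint R.domain (pKer M) := by
  rw [← h.range_eq_domain, Submodule.disjoint_def]
  rintro _ ⟨y, rfl⟩ hy
  have hy0 : y = 0 :=
    M.mem_graph_snd_inj (le_graph_of_le hRM (h.mem_graph y)) (mem_pKer_iff.1 hy) rfl
  rw [hy0, S.map_zero]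

theorem domain_sup_pKer (h : IsTotalInverse R S) (hRM : R ≤ M) :
    R.domain ⊔ pKer M = M.domain := by
  refine le_antisymm (sup_le hRM.1 (pKer_le_domain M)) fun w hw ↦ ?_
  have hker : w - S (M ⟨w, hw⟩) ∈ pKer M := by
    have := M.graph.sub_mem (M.mem_graph ⟨w, hw⟩) (le_graph_of_le hRM (h.mem_graph (M ⟨w, hw⟩)))
    rwa [Prod.mk_sub_mk, sub_self, ← mem_pKer_iff] at this
  have hdom : S (M ⟨w, hw⟩) ∈ R.domain := mem_domain_of_mem_graph (h.mem_graph _)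
  exact add_sub_cancel (S (M ⟨w, hw⟩)) w ▸ Submodule.add_mem_sup hdom hker

theorem isDirectSumOfThree (h : IsTotalInverse R S) (hAR : A ≤ R) (hRM : R ≤ M)
    {K : Submodule ℂ V} (hK : IsCompl (LinearMap.range A.toFun) K) :
    IsDirectSumOfThree M.domain A.domain (pPreimage R K) (pKer M) := by
  have hdisjoint : Disjoint A.domain (pPreimage R K) := by
    rw [← h.map_range_eq_domain_of_le hAR, h.pPreimage_eq_map]
    exact Submodule.disjoint_map h.injective hK.disjoint
  have hsup : A.domain ⊔ pPreimage R K = R.domain := by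
    rw [← h.map_range_eq_domain_of_le hAR, h.pPreimage_eq_map, ← Submodule.map_sup,
      hK.sup_eq_top, Submodule.map_top, h.range_eq_domain]
  have hsum := isDirectSumOfThree_of_disjoint hdisjoint (hsup ▸ h.disjoint_domain_pKer hRM)
  rwa [hsup, h.domain_sup_pKer hRM] at hsum

end Extension

section Topology

variable {𝕜 E F : Type*} [CommRing 𝕜] [AddCommGroup E] [Module 𝕜 E] [TopologicalSpace E]
  [AddCommGroup F] [Module 𝕜 F] [TopologicalSpace F]

theorem isClosed_range_of_le {A R : E →ₗ.[𝕜] F} {S : F →L[𝕜] E} (h : IsTotalInverse R S.toLinearMap)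
    (hAR : A ≤ R) (hA : A.IsClosed) : IsClosed (LinearMap.range A.toFun : Set F) := by
  have range_eq : (LinearMap.range A.toFun : Set F) =
      (fun y ↦ (S y, y)) ⁻¹' (A.graph : Set (E × F)) := by
    ext y
    refine mem_range_iff.trans ⟨fun ⟨x, hx⟩ ↦ ?_, fun hy ↦ ⟨S y, hy⟩⟩
    have hSy : S y = x := (h x y).1 (le_graph_of_le hAR hx)
    exact Set.mem_preimage.2 (hSy ▸ hx)
  rw [range_eq]
  exact IsClosed.preimage (by fun_prop) hA

end Topology

section Adjoint

variable {𝕜 E F : Type*} [RCLike 𝕜] [NormedAddCommGroup E] [InnerProductSpace 𝕜 E]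
  [CompleteSpace E] [NormedAddCommGroup F] [InnerProductSpace 𝕜 F] [CompleteSpace F]

theorem adjoint {R : E →ₗ.[𝕜] F} {S : F →L[𝕜] E} (h : IsTotalInverse R S.toLinearMap)
    (hR : Dense (R.domain : Set E)) : IsTotalInverse (R†) S.adjoint.toLinearMap := by
  intro y x
  calc (y, x) ∈ (R†).graph
      ↔ ∀ a b, (a, b) ∈ R.graph → inner 𝕜 b y - inner 𝕜 a x = 0 := by
        rw [adjoint_graph_eq_graph_adjoint hR, Submodule.mem_adjoint_iff]
    _ ↔ ∀ b, inner 𝕜 b (S.adjoint x) = inner 𝕜 b y := by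
        simp only [h _ _, ContinuousLinearMap.coe_coe, forall_comm (α := E), forall_eq',
          sub_eq_zero, ContinuousLinearMap.adjoint_inner_right, eq_comm (a := inner 𝕜 _ y)]
    _ ↔ S.adjoint x = y := (ext_iff_inner_left 𝕜).symm

end Adjoint

end IsTotalInverse

theorem exists_isTotalInverse_of_isClosed_of_bijective {𝕜 E F : Type*} [NontriviallyNormedField 𝕜]
    [NormedAddCommGroup E] [NormedSpace 𝕜 E] [CompleteSpace E] [NormedAddCommGroup F]
    [NormedSpace 𝕜 F] [CompleteSpace F] {R : E →ₗ.[𝕜] F} (hR : R.IsClosed)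
    (hbij : Function.Bijective R) : ∃ S : F →L[𝕜] E, IsTotalInverse R S.toLinearMap := by
  let e : R.domain ≃ₗ[𝕜] F := LinearEquiv.ofBijective R.toFun hbij
  let S : F →ₗ[𝕜] E := R.domain.subtype ∘ₗ e.symm.toLinearMap
  have hS : IsTotalInverse R S := fun x y ↦ by
    refine (mem_graph_iff R).trans ⟨?_, fun hx ↦ ⟨e.symm y, hx, e.apply_symm_apply y⟩⟩
    rintro ⟨z, rfl, rfl⟩
    exact congrArg Subtype.val (e.symm_apply_apply z)
  have graph_eq : (S.graph : Set (F × E)) = Prod.swap ⁻¹' (R.graph : Set (E × F)) := by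
    ext ⟨y, x⟩
    exact eq_comm.trans (hS x y).symm
  exact ⟨⟨S, S.continuous_of_isClosed_graph (graph_eq ▸ hR.preimage continuous_swap)⟩, hS⟩

theorem isFormalAdjoint_of_le {𝕜 E F : Type*} [RCLike 𝕜] [NormedAddCommGroup E]
    [InnerProductSpace 𝕜 E] [NormedAddCommGroup F] [InnerProductSpace 𝕜 F] {A R : E →ₗ.[𝕜] F}
    {B : F →ₗ.[𝕜] E} (hAR : A ≤ R) (hRB : R.IsFormalAdjoint B) : A.IsFormalAdjoint B :=
  fun x y ↦ by
    obtain ⟨z, hzx, hAx⟩ := exists_of_le hAR x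
    rw [hAx, hzx, hRB z y]

namespace IsPreFriedrichsPair

theorem dense_domain_right {V : Type*} [NormedAddCommGroup V] [InnerProductSpace ℂ V]
    {T Tt : V →ₗ.[ℂ] V} (h : IsPreFriedrichsPair T Tt) : Dense (Tt.domain : Set V) :=
  h.dom_eq ▸ h.dense'

theorem le_adjoint {T Tt : H →ₗ.[ℂ] H} (h : IsPreFriedrichsPair T Tt) : T ≤ Tt† :=
  have hformal : T.IsFormalAdjoint Tt := h.t1
  hformal.symm.le_adjoint h.dense_domain_right

end IsPreFriedrichsPair

theorem pKer_adjoint_eq_range_orthogonal {A : H →ₗ.[ℂ] H} (hA : Dense (A.domain : Set H)) :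
    pKer (A†) = (LinearMap.range A.toFun)ᗮ := by
  ext k
  simp only [mem_pKer_iff, adjoint_graph_eq_graph_adjoint hA, Submodule.mem_adjoint_iff,
    inner_zero_right, sub_zero, Submodule.mem_orthogonal]
  refine ⟨fun hk y hy ↦ ?_, fun hk x y hxy ↦ hk y (mem_range_iff.2 ⟨x, hxy⟩)⟩
  obtain ⟨x, hxy⟩ := mem_range_iff.1 hy
  exact hk x y hxy

theorem isDirectSumOfThree_pKer_adjoint {A R M : H →ₗ.[ℂ] H} {S : H →L[ℂ] H}
    (hS : IsTotalInverse R S.toLinearMap) (hAR : A ≤ R) (hRM : R ≤ M)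
    (hdense : Dense (A.domain : Set H)) (hA : A.IsClosed) :
    IsDirectSumOfThree M.domain A.domain (pPreimage R (pKer (A†))) (pKer M) := by
  have : CompleteSpace (LinearMap.range A.toFun) :=
    (hS.isClosed_range_of_le hAR hA).completeSpace_coe
  rw [pKer_adjoint_eq_range_orthogonal hdense]
  exact hS.isDirectSumOfThree hAR hRM (Submodule.isCompl_orthogonal _)

theorem statement12_general {T Tt R : H →ₗ.[ℂ] H} (hTdense : Dense (T.domain : Set H))
    (hTtdense : Dense (Tt.domain : Set H)) (hT : T.IsClosed) (hTt : Tt.IsClosed)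
    (hTR : T ≤ R) (hRTt : R ≤ Tt†) (hR : R.IsClosed) (hbij : Function.Bijective R) :
    IsDirectSumOfThree (Tt†).domain T.domain (pPreimage R (pKer (T†))) (pKer (Tt†)) ∧
      IsDirectSumOfThree (T†).domain Tt.domain (pPreimage (R†) (pKer (Tt†))) (pKer (T†)) := by
  obtain ⟨S, hS⟩ := exists_isTotalInverse_of_isClosed_of_bijective hR hbij
  have hRdense : Dense (R.domain : Set H) := hTdense.mono hTR.1
  have hTtR : Tt ≤ R† :=
    (isFormalAdjoint_of_le hRTt (adjoint_isFormalAdjoint hTtdense)).le_adjoint hRdense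
  have hRT : R† ≤ T† :=
    (isFormalAdjoint_of_le hTR (adjoint_isFormalAdjoint hRdense).symm).le_adjoint hTdense
  exact ⟨isDirectSumOfThree_pKer_adjoint hS hTR hRTt hTdense hT,
    isDirectSumOfThree_pKer_adjoint (hS.adjoint hRdense) hTtR hRT hTtdense hTt⟩

/-- For a joint pair `(T₀, T̃₀)` of closed abstract Friedrichs operators and
any bijective realisation `T_r = T₁|_{V_r}` of `T₀` (its domain closed in the graph norm and
containing `W₀`), the graph space decomposes as the direct sums
`W = W₀ ∔ T_r⁻¹(ker T̃₁) ∔ ker T₁` and `W = W₀ ∔ (T_r*)⁻¹(ker T₁) ∔ ker T̃₁`. -/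
theorem statement12 (T Tt : H →ₗ.[ℂ] H) (hF : IsFriedrichsPair T Tt)
    (hT : T.IsClosed) (hTt : Tt.IsClosed)
    (Vr : Submodule ℂ H) (hVr₀ : T.domain ≤ Vr) (hVrW : Vr ≤ (Tt†).domain)
    (hVrClosed : IsClosed {p : H × H | p.1 ∈ Vr ∧ p ∈ (Tt†).graph})
    (hbij : Function.Bijective
      (fun x : ((Tt†).domRestrict Vr).domain => ((Tt†).domRestrict Vr) x)) :
    (T.domain ⊔ pPreimage ((Tt†).domRestrict Vr) (pKer (T†)) ⊔ pKer (Tt†)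
        = (Tt†).domain ∧
      ∀ u₀ ∈ T.domain, ∀ v ∈ pPreimage ((Tt†).domRestrict Vr) (pKer (T†)),
        ∀ ν ∈ pKer (Tt†), u₀ + v + ν = 0 → u₀ = 0 ∧ v = 0 ∧ ν = 0) ∧
    (T.domain ⊔ pPreimage (((Tt†).domRestrict Vr)†) (pKer (Tt†)) ⊔ pKer (T†)
        = (T†).domain ∧
      ∀ u₀ ∈ T.domain, ∀ v ∈ pPreimage (((Tt†).domRestrict Vr)†) (pKer (Tt†)),
        ∀ ν ∈ pKer (T†), u₀ + v + ν = 0 → u₀ = 0 ∧ v = 0 ∧ ν = 0) := by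
  have hsum := statement12_general hF.dense' hF.dense_domain_right hT hTt
    (le_domRestrict_of_le hF.le_adjoint hVr₀) domRestrict_le
    (isClosed_domRestrict_iff.2 hVrClosed) hbij
  rwa [← hF.dom_eq] at hsum
end
end

section
/- Let (T₀, T̃₀) be a joint pair of closed abstract Friedrichs operators on a complex Hilbert space H, with minimal domain W₀ and graph space W. Then the [⊥]-biorthogonal complement of the subspace W₀ + ker T₁ + ker T̃₁ equals W; equivalently, (W₀ + ker T₁ + ker T̃₁)^{[⊥]} = W₀. -/
open LinearPMap
open scoped LinearPMap

noncomputable section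

variable {H : Type*} [NormedAddCommGroup H] [InnerProductSpace ℂ H] [CompleteSpace H]

local notation "⟪" x ", " y "⟫" => @inner ℂ _ _ x y

/-- The `[⊥]`-orthogonal complement, inside the graph space `W = dom T₁ = dom T̃₁`, of a set
`S ⊆ W`, with respect to the boundary form `[u | v] := ⟪T₁ u, v⟫ − ⟪u, T̃₁ v⟫`. -/
def bdryPerp (T₁ Tt₁ : H →ₗ.[ℂ] H) (S : Set H) : Set H :=
  {x | ∃ hx : x ∈ T₁.domain,
    ∀ (v : T₁.domain) (w : Tt₁.domain), (v : H) = (w : H) → (v : H) ∈ S →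
      ⟪T₁ ⟨x, hx⟩, (v : H)⟫ - ⟪x, Tt₁ w⟫ = 0}

/-!
If `x` is `[⊥]`-orthogonal to `ker T̃₁ = (ran T₀)ᗮ`, then `T₁ x` lies in `(ran T₀)ᗮᗮ`, which is
`ran T₀` because `T₀` is closed and, by (T3), bounded below. Hence `x = φ + n` with `φ ∈ W₀` and
`n ∈ ker T₁`. Now `W₀` is `[⊥]`-orthogonal to all of `W`, so if `x` is also `[⊥]`-orthogonal to
`ker T₁`, then `[n | n] = 0`. But `T₁ + T̃₁` is the restriction to `W` of a bounded coercive
operator, so the form `[n | n] = -⟪n, (T₁ + T̃₁) n⟫` is definite on `ker T₁`, and `n = 0`.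
-/

section NormedSpace

variable {𝕜 E F : Type*} [NontriviallyNormedField 𝕜]
  [NormedAddCommGroup E] [NormedSpace 𝕜 E] [NormedAddCommGroup F] [NormedSpace 𝕜 F]

theorem isClosed_range_of_norm_le_mul_norm [CompleteSpace E] [CompleteSpace F]
    {f : E →ₗ.[𝕜] F} (hf : f.IsClosed) {K : NNReal}
    (hK : ∀ x : f.domain, ‖(x : E)‖ ≤ K * ‖f x‖) :
    IsClosed (LinearMap.range f.toFun : Set F) := by
  have : CompleteSpace f.graph := completeSpace_coe_iff_isComplete.2 (_root_.IsClosed.isComplete hf)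
  let sndGraph : f.graph →L[𝕜] F := (ContinuousLinearMap.snd 𝕜 E F).comp f.graph.subtypeL
  have antilipschitz : AntilipschitzWith (max K 1) sndGraph := by
    refine sndGraph.antilipschitz_of_bound ?_
    rintro ⟨⟨a, b⟩, hab⟩
    obtain ⟨x, rfl, rfl⟩ := f.mem_graph_iff.1 hab
    refine max_le ((hK x).trans ?_) ?_
    · exact mul_le_mul_of_nonneg_right (le_max_left K 1) (norm_nonneg _)
    · exact le_mul_of_one_le_left (norm_nonneg _) (le_max_right K 1)
  have range_eq : (LinearMap.range f.toFun : Set F) = Set.range sndGraph := by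
    ext b
    simp [sndGraph]
  rw [range_eq]
  exact antilipschitz.isClosed_range sndGraph.uniformContinuous

end NormedSpace

section InnerProductSpace

variable {𝕜 E F : Type*} [RCLike 𝕜]
  [NormedAddCommGroup E] [InnerProductSpace 𝕜 E] [NormedAddCommGroup F] [InnerProductSpace 𝕜 F]

theorem mul_norm_le_norm_of_mul_norm_sq_le_re_inner {c : ℝ} {x y : E}
    (h : c * ‖x‖ ^ 2 ≤ RCLike.re (inner 𝕜 y x)) : c * ‖x‖ ≤ ‖y‖ := by
  rcases (norm_nonneg x).eq_or_lt with hx | hx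
  · simp [← hx]
  · refine le_of_mul_le_mul_right ?_ hx
    calc c * ‖x‖ * ‖x‖ = c * ‖x‖ ^ 2 := by ring
      _ ≤ RCLike.re (inner 𝕜 y x) := h
      _ ≤ ‖y‖ * ‖x‖ := re_inner_le_norm y x

theorem adjoint_vadd_neg [CompleteSpace E] [CompleteSpace F] (A : E →L[𝕜] F) {T : E →ₗ.[𝕜] F}
    (hT : Dense (T.domain : Set E)) :
    ((A : E →ₗ[𝕜] F) +ᵥ -T)† = (A.adjoint : F →ₗ[𝕜] E) +ᵥ -T† := by
  have hAT : Dense (((A : E →ₗ[𝕜] F) +ᵥ -T).domain : Set E) := hT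
  have formal : ((A : E →ₗ[𝕜] F) +ᵥ -T).IsFormalAdjoint ((A.adjoint : F →ₗ[𝕜] E) +ᵥ -T†) := by
    intro x y
    have hxy := (adjoint_isFormalAdjoint hT).symm x y
    simp only [vadd_apply, LinearPMap.neg_apply, ContinuousLinearMap.coe_coe, inner_add_left,
      inner_add_right, inner_neg_left, inner_neg_right, ContinuousLinearMap.adjoint_inner_right]
    rw [hxy]
  have hle := formal.le_adjoint hAT
  refine (eq_of_le_of_domain_eq hle (le_antisymm hle.1 fun y hy => ?_)).symm
  refine mem_adjoint_domain_of_exists y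
    ⟨A.adjoint y - ((A : E →ₗ[𝕜] F) +ᵥ -T)† ⟨y, hy⟩, fun x => ?_⟩
  have hyx := adjoint_isFormalAdjoint hAT ⟨y, hy⟩ x
  rw [inner_sub_left, hyx]
  simp only [vadd_apply, LinearPMap.neg_apply, ContinuousLinearMap.coe_coe, inner_add_right,
    inner_neg_right, ContinuousLinearMap.adjoint_inner_left]
  ring

end InnerProductSpace

theorem pKer_adjoint_eq_orthogonal_range {T : H →ₗ.[ℂ] H} (hT : Dense (T.domain : Set H)) :
    pKer (T†) = (LinearMap.range T.toFun)ᗮ := by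
  ext v
  rw [Submodule.mem_orthogonal']
  constructor
  · rintro ⟨w, hw, rfl⟩ _ ⟨φ, rfl⟩
    have hw : T† w = 0 := hw
    exact (adjoint_isFormalAdjoint hT w φ).symm.trans (by rw [hw, inner_zero_left])
  · intro hv
    have zero_eq (φ : T.domain) : ⟪(0 : H), (φ : H)⟫ = ⟪v, T φ⟫ := by
      rw [inner_zero_left]
      exact (hv _ ⟨φ, rfl⟩).symm
    exact ⟨⟨v, mem_adjoint_domain_of_exists v ⟨0, zero_eq⟩⟩, adjoint_apply_eq hT _ zero_eq, rfl⟩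

section bdryPerp

variable {T Tt : H →ₗ.[ℂ] H}

omit [CompleteSpace H] in
theorem sub_mem_bdryPerp {S : Set H} {x y : H} (hx : x ∈ bdryPerp T Tt S)
    (hy : y ∈ bdryPerp T Tt S) : x - y ∈ bdryPerp T Tt S := by
  obtain ⟨hxT, hx⟩ := hx
  obtain ⟨hyT, hy⟩ := hy
  refine ⟨T.domain.sub_mem hxT hyT, fun v w hvw hv => ?_⟩
  have map_sub : T ⟨x - y, T.domain.sub_mem hxT hyT⟩ = T ⟨x, hxT⟩ - T ⟨y, hyT⟩ :=
    T.map_sub ⟨x, hxT⟩ ⟨y, hyT⟩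
  rw [map_sub, inner_sub_left, inner_sub_left]
  linear_combination hx v w hvw hv - hy v w hvw hv

theorem domain_subset_bdryPerp (h : T.IsFormalAdjoint Tt) (hT : Dense (T.domain : Set H))
    (hTt : Dense (Tt.domain : Set H)) (S : Set H) : (T.domain : Set H) ⊆ bdryPerp (Tt†) (T†) S := by
  intro x hx
  have hle : T ≤ Tt† := h.symm.le_adjoint hTt
  refine ⟨hle.1 hx, fun v w hvw _ => sub_eq_zero.2 ?_⟩
  rw [← hle.2 (x := ⟨x, hx⟩) rfl, hvw]
  exact (adjoint_isFormalAdjoint hT).symm ⟨x, hx⟩ w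

theorem bdryPerp_domain (h : T.IsFormalAdjoint Tt) (hT : Dense (T.domain : Set H))
    (hTt : Dense (Tt.domain : Set H)) :
    bdryPerp (Tt†) (T†) (Tt.domain : Set H) = (Tt†).domain := by
  refine Set.Subset.antisymm (fun x ⟨hx, _⟩ => hx) fun x hx => ⟨hx, fun v w hvw hv => ?_⟩
  rw [← (h.le_adjoint hT).2 (x := ⟨v, hv⟩) hvw, sub_eq_zero]
  exact adjoint_isFormalAdjoint hTt ⟨x, hx⟩ ⟨v, hv⟩

end bdryPerp

/-- The bounded operator on `H` extending `T + T̃`. It is meaningful only under (T2) and density of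
the common domain; `LinearMap.extendOfNorm` supplies a junk value otherwise. -/
def boundedSum (T Tt : H →ₗ.[ℂ] H) : H →L[ℂ] H :=
  (T + Tt).toFun.extendOfNorm (T + Tt).domain.subtype

namespace IsPreFriedrichsPair

variable {T Tt : H →ₗ.[ℂ] H} (hF : IsPreFriedrichsPair T Tt)

include hF

omit [CompleteSpace H] in
theorem dense_domain_right_s13 : Dense (Tt.domain : Set H) := hF.dom_eq ▸ hF.dense'

omit [CompleteSpace H] in
theorem dense_domain_add : Dense ((T + Tt).domain : Set H) := by
  rw [add_domain, ← hF.dom_eq, inf_idem]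
  exact hF.dense'

theorem boundedSum_apply (φ : (T + Tt).domain) : boundedSum T Tt φ = (T + Tt) φ := by
  obtain ⟨c, -, hc⟩ := hF.t2
  exact LinearMap.extendOfNorm_eq hF.dense_domain_add.denseRange_val ⟨c, hc⟩ φ

theorem eq_boundedSum_vadd_neg : Tt = (boundedSum T Tt : H →ₗ[ℂ] H) +ᵥ -T := by
  refine LinearPMap.ext hF.dom_eq.symm fun x hx hx' => ?_
  have hsum : boundedSum T Tt x = T ⟨x, hx'⟩ + Tt ⟨x, hx⟩ := hF.boundedSum_apply ⟨x, hx', hx⟩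
  change Tt ⟨x, hx⟩ = boundedSum T Tt x + -T ⟨x, hx'⟩
  rw [hsum, add_neg_cancel_comm]

theorem adjoint_eq_boundedSum_adjoint_vadd_neg :
    Tt† = ((boundedSum T Tt).adjoint : H →ₗ[ℂ] H) +ᵥ -T† := by
  rw [← adjoint_vadd_neg _ hF.dense', ← hF.eq_boundedSum_vadd_neg]

theorem adjoint_domain_eq : (Tt†).domain = (T†).domain := by
  rw [hF.adjoint_eq_boundedSum_adjoint_vadd_neg, vadd_domain, neg_domain]

theorem adjoint_apply_add_adjoint_apply (v : (Tt†).domain) (w : (T†).domain) (hvw : (v : H) = w) :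
    Tt† v + T† w = (boundedSum T Tt).adjoint v := by
  have h : Tt† v = (boundedSum T Tt).adjoint w + -(T† w) :=
    hF.adjoint_eq_boundedSum_adjoint_vadd_neg.le.2 hvw
  rw [h, hvw, neg_add_cancel_right]

theorem adjoint_apply_mem_range (hran : IsClosed (LinearMap.range T.toFun : Set H)) {S : Set H}
    (hS : (pKer (T†) : Set H) ⊆ S) {x : H} (hx : x ∈ bdryPerp (Tt†) (T†) S) :
    Tt† ⟨x, hx.1⟩ ∈ LinearMap.range T.toFun := by
  have := hran.completeSpace_coe
  rw [← (LinearMap.range T.toFun).orthogonal_orthogonal,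
    ← pKer_adjoint_eq_orthogonal_range hF.dense', Submodule.mem_orthogonal']
  intro v hv
  have hvS : v ∈ S := hS hv
  obtain ⟨w, hw, rfl⟩ := hv
  have hw : T† w = 0 := hw
  simpa [hw] using hx.2 ⟨w, hF.adjoint_domain_eq.ge w.2⟩ w rfl hvS

end IsPreFriedrichsPair

namespace IsFriedrichsPair

variable {T Tt : H →ₗ.[ℂ] H} (hF : IsFriedrichsPair T Tt)

include hF

theorem exists_boundedSum_coercive :
    ∃ μ : ℝ, 0 < μ ∧ ∀ x : H, 2 * μ * ‖x‖ ^ 2 ≤ (⟪boundedSum T Tt x, x⟫).re := by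
  obtain ⟨μ, hμ, h⟩ := hF.t3
  refine ⟨μ, hμ, fun x => hF.dense_domain_add.induction (fun φ hφ => ?_) ?_ x⟩
  · rw [hF.boundedSum_apply ⟨φ, hφ⟩]
    exact h ⟨φ, hφ⟩
  · exact isClosed_le (by fun_prop) (Complex.continuous_re.comp (by fun_prop))

theorem eq_zero_of_inner_boundedSum_eq_zero {x : H} (hx : ⟪boundedSum T Tt x, x⟫ = 0) : x = 0 := by
  obtain ⟨μ, hμ, h⟩ := hF.exists_boundedSum_coercive
  by_contra hne
  have hpos : 0 < 2 * μ * ‖x‖ ^ 2 := by positivity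
  exact (hpos.trans_le (h x)).ne' (by rw [hx, Complex.zero_re])

omit [CompleteSpace H] in
theorem exists_mul_norm_sq_le_re_inner :
    ∃ μ : ℝ, 0 < μ ∧ ∀ φ : T.domain, μ * ‖(φ : H)‖ ^ 2 ≤ (⟪T φ, (φ : H)⟫).re := by
  obtain ⟨μ, hμ, h⟩ := hF.t3
  refine ⟨μ, hμ, fun φ => ?_⟩
  have hφ : (φ : H) ∈ Tt.domain := hF.dom_eq ▸ φ.2
  have hsum : 2 * μ * ‖(φ : H)‖ ^ 2 ≤ (⟪T φ + Tt ⟨φ, hφ⟩, (φ : H)⟫).re := h ⟨φ, φ.2, hφ⟩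
  have hre : (⟪Tt ⟨φ, hφ⟩, (φ : H)⟫).re = (⟪T φ, (φ : H)⟫).re := by
    rw [hF.t1 φ ⟨φ, hφ⟩, ← inner_conj_symm, Complex.conj_re]
  rw [inner_add_left, Complex.add_re, hre] at hsum
  linarith

theorem isClosed_range (hT : T.IsClosed) : IsClosed (LinearMap.range T.toFun : Set H) := by
  obtain ⟨μ, hμ, h⟩ := hF.exists_mul_norm_sq_le_re_inner
  refine isClosed_range_of_norm_le_mul_norm hT (K := ⟨μ⁻¹, inv_nonneg.2 hμ.le⟩) fun φ => ?_
  exact (le_inv_mul_iff₀ hμ).2 (mul_norm_le_norm_of_mul_norm_sq_le_re_inner (𝕜 := ℂ) (h φ))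

theorem eq_zero_of_mem_pKer_of_mem_bdryPerp {n : H} (hn : n ∈ pKer (Tt†)) {S : Set H}
    (hS : n ∈ S) (hperp : n ∈ bdryPerp (Tt†) (T†) S) : n = 0 := by
  obtain ⟨v, hv, rfl⟩ := hn
  have hv : Tt† v = 0 := hv
  let w : (T†).domain := ⟨v, hF.adjoint_domain_eq.le v.2⟩
  have hform : ⟪Tt† v, (v : H)⟫ - ⟪(v : H), T† w⟫ = 0 := hperp.2 v w rfl hS
  have hsum : T† w = (boundedSum T Tt).adjoint v := by
    rw [← hF.adjoint_apply_add_adjoint_apply v w rfl, hv, zero_add]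
  refine hF.eq_zero_of_inner_boundedSum_eq_zero ?_
  rw [hv, inner_zero_left, zero_sub, neg_eq_zero, hsum,
    ContinuousLinearMap.adjoint_inner_right] at hform
  exact hform

theorem bdryPerp_eq_domain (hT : T.IsClosed) {S : Set H} (hker : (pKer (Tt†) : Set H) ⊆ S)
    (hker' : (pKer (T†) : Set H) ⊆ S) : bdryPerp (Tt†) (T†) S = T.domain := by
  have hsub := domain_subset_bdryPerp hF.t1 hF.dense' hF.dense_domain_right_s13 S
  refine Set.Subset.antisymm (fun x hx => ?_) hsub
  obtain ⟨φ, hφ⟩ := hF.adjoint_apply_mem_range (hF.isClosed_range hT) hker' hx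
  have hle : T ≤ Tt† := (LinearPMap.IsFormalAdjoint.symm hF.t1).le_adjoint hF.dense_domain_right_s13
  let φ' : (Tt†).domain := ⟨φ, hle.1 φ.2⟩
  have hmem : x - φ ∈ pKer (Tt†) := by
    refine ⟨⟨x, hx.1⟩ - φ', ?_, rfl⟩
    have hφ' : Tt† φ' = Tt† ⟨x, hx.1⟩ := (hle.2 rfl).symm.trans hφ
    exact (LinearPMap.map_sub _ _ _).trans (sub_eq_zero.2 hφ'.symm)
  have hzero : x - φ = 0 :=
    hF.eq_zero_of_mem_pKer_of_mem_bdryPerp hmem (hker hmem) (sub_mem_bdryPerp hx (hsub φ.2))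
  rw [sub_eq_zero.1 hzero]
  exact φ.2

end IsFriedrichsPair

/-- For a joint pair `(T₀, T̃₀)` of closed abstract Friedrichs operators,
`(W₀ + ker T₁ + ker T̃₁)^{[⊥]} = W₀`, and hence the `[⊥]`-biorthogonal complement of
`W₀ + ker T₁ + ker T̃₁` equals the whole graph space `W`. -/
theorem statement13 (T Tt : H →ₗ.[ℂ] H) (hF : IsFriedrichsPair T Tt)
    (hT : T.IsClosed) (hTt : Tt.IsClosed) :
    bdryPerp (Tt†) (T†) ((T.domain ⊔ pKer (Tt†) ⊔ pKer (T†) : Submodule ℂ H) : Set H)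
        = (T.domain : Set H) ∧
    bdryPerp (Tt†) (T†)
        (bdryPerp (Tt†) (T†)
          ((T.domain ⊔ pKer (Tt†) ⊔ pKer (T†) : Submodule ℂ H) : Set H))
        = ((Tt†).domain : Set H) := by
  have hperp : bdryPerp (Tt†) (T†)
      ((T.domain ⊔ pKer (Tt†) ⊔ pKer (T†) : Submodule ℂ H) : Set H) = (T.domain : Set H) :=
    hF.bdryPerp_eq_domain hT
      (SetLike.coe_mono (le_sup_right.trans le_sup_left)) (SetLike.coe_mono le_sup_right)
  refine ⟨hperp, ?_⟩
  rw [hperp, hF.dom_eq]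
  exact bdryPerp_domain hF.t1 hF.dense' hF.dense_domain_right_s13
end
end
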